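/- arXiv:1105.5106 — 2 statements merged into one kernel-verified Lean document; each statement's English description precedes it below -/
import Mathlib

section
/- Fix an integer n ≥ 5 and let B_n be the set of subsets T of {1, …, n−1} with 1 ≤ |T| ≤ n−3. In the ℚ-vector space ℚ^{B_n} of functions B_n → ℚ with standard basis (e_T), set h_{ab} = ∑_{T ∈ B_n, T ∩ {a,b} = ∅} e_T for distinct a, b ∈ {1, …, n−1}. Define r_{ax} = h_{ax} − h_{12} for each a ∈ {1, 2} and x ∈ {3, …, n−1}, and r_{yz} = h_{yz} − h_{12} for each 2-element subset {y, z} of {3, …, n−1}. Then these 2(n−3) + C(n−3, 2) = C(n, 2) − n vectors are linearly independent in ℚ^{B_n}. -/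
/-- `B_n`: the set of subsets `T` of `{1,…,n-1}` with `1 ≤ |T| ≤ n-3`
(indexing the boundary divisors `Δ_{T ∪ {n}}` of `M̄_{0,n}`). -/
abbrev Bn (n : ℕ) :=
  {T : Finset ℕ // T ⊆ Finset.Icc 1 (n - 1) ∧ 1 ≤ T.card ∧ T.card ≤ n - 3}

/-- `h_{ab} = ∑_{T ∈ B_n, T ∩ {a,b} = ∅} e_T ∈ ℚ^{B_n}`, written in coordinates. -/
def hvec (n a b : ℕ) : Bn n → ℚ :=
  fun T => if (T : Finset ℕ) ∩ {a, b} = ∅ then 1 else 0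

/-- Value of `h_{cd}` at the complement of `{a,b}`. -/
theorem hvec_compl (n a b c d : ℕ) (hc : c ∈ Finset.Icc 1 (n - 1)) (hd : d ∈ Finset.Icc 1 (n - 1))
    (hab : a < b) (hcd : c < d) (T : Bn n) (hT : (T : Finset ℕ) = Finset.Icc 1 (n - 1) \ {a, b}) :
    hvec n c d T = if c = a ∧ d = b then 1 else 0 := by
  unfold hvec
  rw [hT]
  congr 1
  rw [eq_iff_iff, Finset.eq_empty_iff_forall_notMem]
  constructor
  · intro h
    have h1 := h c
    have h2 := h d
    simp only [Finset.mem_inter, Finset.mem_sdiff, Finset.mem_insert, Finset.mem_singleton, hc, hd] at h1 h2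
    simp at h1 h2
    omega
  · rintro ⟨rfl, rfl⟩ x
    simp

/-- The vectors `r_{ax} = h_{ax} - h_{12}` for `a ∈ {1,2}`, `x ∈ {3,…,n-1}`, together
with `r_{yz} = h_{yz} - h_{12}` for 2-element subsets `{y,z}` of `{3,…,n-1}`, are
linearly independent in `ℚ^{B_n}`. -/
theorem kernel_vectors_linearIndependent (n : ℕ) (hn : 5 ≤ n) :
    LinearIndependent ℚ
      (fun p : {p : ℕ × ℕ //
          (p.1 ∈ ({1, 2} : Finset ℕ) ∧ p.2 ∈ Finset.Icc 3 (n - 1)) ∨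
          (p.1 ∈ Finset.Icc 3 (n - 1) ∧ p.2 ∈ Finset.Icc 3 (n - 1) ∧ p.1 < p.2)} =>
        hvec n p.1.1 p.1.2 - hvec n 1 2) := by
  rw [linearIndependent_iff']
  intro s g hg i hi
  have key : ∀ p : {p : ℕ × ℕ //
          (p.1 ∈ ({1, 2} : Finset ℕ) ∧ p.2 ∈ Finset.Icc 3 (n - 1)) ∨
          (p.1 ∈ Finset.Icc 3 (n - 1) ∧ p.2 ∈ Finset.Icc 3 (n - 1) ∧ p.1 < p.2)},
      p.1.1 ∈ Finset.Icc 1 (n - 1) ∧ p.1.2 ∈ Finset.Icc 1 (n - 1) ∧ p.1.1 < p.1.2 ∧ 3 ≤ p.1.2 := by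
    rintro ⟨⟨a, b⟩, h⟩
    simp only [Finset.mem_insert, Finset.mem_singleton, Finset.mem_Icc] at h ⊢
    omega
  obtain ⟨ha, hb, hab, hb3⟩ := key i
  have hcard : (Finset.Icc 1 (n - 1) \ {i.1.1, i.1.2}).card = n - 3 := by
    rw [Finset.card_sdiff_of_subset, Finset.card_pair hab.ne, Nat.card_Icc]
    · omega
    · intro x hx
      simp only [Finset.mem_insert, Finset.mem_singleton] at hx
      rcases hx with rfl | rfl <;> assumption
  let T : Bn n := ⟨Finset.Icc 1 (n - 1) \ {i.1.1, i.1.2}, Finset.sdiff_subset, by omega, by omega⟩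
  have h12 : hvec n 1 2 T = 0 := by
    rw [hvec_compl n i.1.1 i.1.2 1 2 (by simp; omega) (by simp; omega) hab (by omega) T rfl,
      if_neg (by omega)]
  have hT := congrFun hg T
  simp only [Finset.sum_apply, Pi.smul_apply, Pi.sub_apply, h12, sub_zero, smul_eq_mul,
    Pi.zero_apply] at hT
  rw [Finset.sum_eq_single i] at hT
  · rw [hvec_compl n _ _ _ _ ha hb hab hab T rfl] at hT
    simpa using hT
  · intro q _ hq
    obtain ⟨hc, hd, hcd, _⟩ := key q
    rw [hvec_compl n _ _ _ _ hc hd hab hcd T rfl, if_neg, mul_zero]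
    rintro ⟨h1, h2⟩
    exact hq (Subtype.ext (Prod.ext h1 h2))
  · intro h
    exact absurd hi h
end

section
/- Fix an integer n ≥ 5 and let B_n be the set of subsets T of {1, …, n−1} with 1 ≤ |T| ≤ n−3. In the ℚ-vector space ℚ^{B_n} of functions B_n → ℚ with standard basis (e_T), set h_{ab} = ∑_{T ∈ B_n, T ∩ {a,b} = ∅} e_T for distinct a, b ∈ {1, …, n−1}, and let K ⊆ ℚ^{B_n} be the ℚ-linear span of the vectors h_{ax} − h_{12} for a ∈ {1, 2}, x ∈ {3, …, n−1}, together with h_{yz} − h_{12} for 2-element subsets {y, z} of {3, …, n−1}. Let J be a subset of {3, …, n−1} with 0 ≤ |J| ≤ n−4 and set f_J = h_{12} − ∑_{T ⊆ J, T ≠ ∅} e_T. Then the set of functions d : B_n → ℕ whose image in ℚ^{B_n} satisfies d − f_J ∈ K is exactly the set { h_{ab} − ∑_{T ⊆ J, T ≠ ∅} e_T : {a, b} a 2-element subset of {1, …, n−1} ∖ J } (in particular each of these vectors has nonnegative integer coordinates). -/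
/-- `∑_{T ⊆ J, T ≠ ∅} e_T ∈ ℚ^{B_n}`, written in coordinates. -/
def svec (n : ℕ) (J : Finset ℕ) : Bn n → ℚ :=
  fun T => if (T : Finset ℕ) ⊆ J ∧ (T : Finset ℕ).Nonempty then 1 else 0

/-- `K ⊆ ℚ^{B_n}`: the span of `h_{ax} - h_{12}` for `a ∈ {1,2}`, `x ∈ {3,…,n-1}`,
and `h_{yz} - h_{12}` for 2-element subsets `{y,z}` of `{3,…,n-1}`. -/
def Kker (n : ℕ) : Submodule ℚ (Bn n → ℚ) :=
  Submodule.span ℚ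
    ({v | ∃ a x, a ∈ ({1, 2} : Finset ℕ) ∧ x ∈ Finset.Icc 3 (n - 1) ∧
        v = hvec n a x - hvec n 1 2} ∪
      {v | ∃ y z, y ∈ Finset.Icc 3 (n - 1) ∧ z ∈ Finset.Icc 3 (n - 1) ∧ y < z ∧
        v = hvec n y z - hvec n 1 2})

/-- `h_p` for a set `p`. -/
def hset (n : ℕ) (p : Finset ℕ) : Bn n → ℚ :=
  fun T => if (T : Finset ℕ) ∩ p = ∅ then 1 else 0

/-- The pairs in `{1,…,n-1}`. -/
def prs (n : ℕ) : Finset (Finset ℕ) := Finset.powersetCard 2 (Finset.Icc 1 (n - 1))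

theorem compl_mem (n : ℕ) (hn : 5 ≤ n) (p : Finset ℕ) (hp : p ∈ prs n) :
    Finset.Icc 1 (n - 1) \ p ⊆ Finset.Icc 1 (n - 1) ∧
      1 ≤ (Finset.Icc 1 (n - 1) \ p).card ∧ (Finset.Icc 1 (n - 1) \ p).card ≤ n - 3 := by
  obtain ⟨h1, h2⟩ := Finset.mem_powersetCard.1 hp
  have := Finset.card_sdiff_of_subset h1
  rw [Nat.card_Icc] at this
  exact ⟨Finset.sdiff_subset, by omega, by omega⟩

/-- Coordinate at the complement of `p`. -/
noncomputable def ev (n : ℕ) (u : Bn n → ℚ) (p : Finset ℕ) : ℚ :=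
  open Classical in
  if h : (Finset.Icc 1 (n - 1) \ p ⊆ Finset.Icc 1 (n - 1) ∧
      1 ≤ (Finset.Icc 1 (n - 1) \ p).card ∧ (Finset.Icc 1 (n - 1) \ p).card ≤ n - 3)
  then u ⟨_, h⟩ else 0

theorem ev_add (n : ℕ) (u v : Bn n → ℚ) (p : Finset ℕ) :
    ev n (u + v) p = ev n u p + ev n v p := by
  unfold ev; split_ifs <;> simp

theorem ev_smul (n : ℕ) (c : ℚ) (u : Bn n → ℚ) (p : Finset ℕ) :
    ev n (c • u) p = c * ev n u p := by
  unfold ev; split_ifs <;> simp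

theorem ev_hset (n : ℕ) (hn : 5 ≤ n) (p q : Finset ℕ) (hp : p ∈ prs n) (hq : q ∈ prs n) :
    ev n (hset n q) p = if p = q then 1 else 0 := by
  unfold ev
  rw [dif_pos (compl_mem n hn p hp)]
  unfold hset
  obtain ⟨h1, h2⟩ := Finset.mem_powersetCard.1 hp
  obtain ⟨h3, h4⟩ := Finset.mem_powersetCard.1 hq
  congr 1
  apply propext
  constructor
  · intro h
    have hs : q ⊆ p := by
      intro x hx
      by_contra hxp
      have : x ∈ (Finset.Icc 1 (n - 1) \ p) ∩ q :=
        Finset.mem_inter.2 ⟨Finset.mem_sdiff.2 ⟨h3 hx, hxp⟩, hx⟩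
      simp only [h] at this
      simp at this
    exact (Finset.eq_of_subset_of_card_le hs (by omega)).symm
  · rintro rfl
    simp

/-- Expansion of `u` in the `h_p` with coefficient sum `s`. -/
def Good (n : ℕ) (u : Bn n → ℚ) (s : ℚ) : Prop :=
  (∀ T, u T = ∑ p ∈ prs n, ev n u p * hset n p T) ∧ ∑ p ∈ prs n, ev n u p = s

theorem good_hset (n : ℕ) (hn : 5 ≤ n) (q : Finset ℕ) (hq : q ∈ prs n) :
    Good n (hset n q) 1 := by
  constructor
  · intro T
    rw [Finset.sum_congr rfl (fun p hp => by rw [ev_hset n hn p q hp hq])]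
    simp [hq]
  · rw [Finset.sum_congr rfl (fun p hp => by rw [ev_hset n hn p q hp hq])]
    simp [hq]

theorem good_add (n : ℕ) (u v : Bn n → ℚ) (s t : ℚ) (hu : Good n u s) (hv : Good n v t) :
    Good n (u + v) (s + t) := by
  constructor
  · intro T
    simp only [ev_add, add_mul, Finset.sum_add_distrib, Pi.add_apply]
    rw [← hu.1 T, ← hv.1 T]
  · simp only [ev_add, Finset.sum_add_distrib]
    rw [hu.2, hv.2]

theorem good_smul (n : ℕ) (c : ℚ) (u : Bn n → ℚ) (s : ℚ) (hu : Good n u s) :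
    Good n (c • u) (c * s) := by
  constructor
  · intro T
    simp only [ev_smul, mul_assoc, ← Finset.mul_sum, Pi.smul_apply, smul_eq_mul]
    rw [← hu.1 T]
  · simp only [ev_smul, ← Finset.mul_sum]
    rw [hu.2]

theorem pair_mem (n a b : ℕ) (ha : 1 ≤ a ∧ a ≤ n - 1) (hb : 1 ≤ b ∧ b ≤ n - 1) (hab : a ≠ b) :
    ({a, b} : Finset ℕ) ∈ prs n := by
  refine Finset.mem_powersetCard.2 ⟨?_, Finset.card_pair hab⟩
  intro x hx
  simp only [Finset.mem_insert, Finset.mem_singleton] at hx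
  rw [Finset.mem_Icc]
  rcases hx with rfl | rfl <;> assumption

theorem good_diff (n : ℕ) (hn : 5 ≤ n) (a b : ℕ) (ha : 1 ≤ a ∧ a ≤ n - 1)
    (hb : 1 ≤ b ∧ b ≤ n - 1) (hab : a ≠ b) : Good n (hvec n a b - hvec n 1 2) 0 := by
  have h1 := good_hset n hn _ (pair_mem n a b ha hb hab)
  have h2 := good_hset n hn _ (pair_mem n 1 2 (by omega) (by omega) (by omega))
  have h3 := good_add n _ _ _ _ h1 (good_smul n (-1) _ _ h2)
  have e : hvec n a b - hvec n 1 2 = hset n {a, b} + (-1 : ℚ) • hset n {1, 2} := by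
    funext T
    simp [hvec, hset, sub_eq_add_neg]
  rw [e]
  simpa using h3

theorem good_K (n : ℕ) (hn : 5 ≤ n) (w : Bn n → ℚ) (hw : w ∈ Kker n) : Good n w 0 := by
  unfold Kker at hw
  induction hw using Submodule.span_induction with
  | mem x hx =>
    rcases hx with ⟨a, x, ha, hx, rfl⟩ | ⟨a, x, ha, hx, hl, rfl⟩
    · simp only [Finset.mem_insert, Finset.mem_singleton, Finset.mem_Icc] at ha hx
      exact good_diff n hn a x (by omega) (by omega) (by omega)
    · simp only [Finset.mem_Icc] at ha hx
      exact good_diff n hn a x (by omega) (by omega) (by omega)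
  | zero =>
    have := good_smul n 0 _ _ (good_hset n hn _ (pair_mem n 1 2 (by omega) (by omega) (by omega)))
    simpa using this
  | add x y _ _ hx hy => simpa using good_add n _ _ _ _ hx hy
  | smul c x _ hx => simpa using good_smul n c _ _ hx

theorem hvec_comm (n a b : ℕ) : hvec n a b = hvec n b a := by
  unfold hvec
  rw [Finset.pair_comm]

theorem diff_mem_K (n a b : ℕ) (ha : 1 ≤ a ∧ a ≤ n - 1)
    (hb : 1 ≤ b ∧ b ≤ n - 1) (hab : a ≠ b) : hvec n a b - hvec n 1 2 ∈ Kker n := by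
  wlog hlt : a < b generalizing a b
  · rw [hvec_comm]
    exact this b a hb ha hab.symm (by omega)
  by_cases hb2 : b ≤ 2
  · obtain rfl : a = 1 := by omega
    obtain rfl : b = 2 := by omega
    simp
  · by_cases ha2 : a ≤ 2
    · refine Submodule.subset_span (Or.inl ⟨a, b, ?_, ?_, rfl⟩)
      · simp only [Finset.mem_insert, Finset.mem_singleton]; omega
      · rw [Finset.mem_Icc]; omega
    · refine Submodule.subset_span (Or.inr ⟨a, b, ?_, ?_, hlt, rfl⟩) <;>
      · rw [Finset.mem_Icc]; omega

theorem not_mem_J (n : ℕ) (hn : 5 ≤ n) (J : Finset ℕ) (a b x : ℕ)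
    (hx : x ∈ Finset.Icc 1 (n - 1)) (hxab : x ∈ ({a, b} : Finset ℕ)) (d : Bn n → ℕ)
    (h : ∀ T, (hvec n a b - svec n J) T = (d T : ℚ)) : x ∉ J := by
  intro hxJ
  have h0 := h ⟨{x}, Finset.singleton_subset_iff.2 hx, by simp, by rw [Finset.card_singleton]; omega⟩
  have e1 : ¬ (({x} : Finset ℕ) ∩ {a, b} = ∅) := by
    rw [Finset.singleton_inter_of_mem hxab]; simp
  simp only [Pi.sub_apply, hvec, svec] at h0
  rw [if_neg e1, if_pos ⟨Finset.singleton_subset_iff.2 hxJ, Finset.singleton_nonempty x⟩] at h0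
  have := Nat.cast_nonneg (α := ℚ) (d ⟨{x}, Finset.singleton_subset_iff.2 hx, by simp, by rw [Finset.card_singleton]; omega⟩)
  linarith

/-- For `J ⊆ {3,…,n-1}` with `|J| ≤ n-4` and `f_J = h_{12} - ∑_{∅ ≠ T ⊆ J} e_T`, the
set of `ℕ`-valued vectors `d` with `d - f_J ∈ K` is exactly
`{h_{ab} - ∑_{∅ ≠ T ⊆ J} e_T : {a,b} a 2-element subset of {1,…,n-1} ∖ J}`. -/
theorem effective_representatives_of_FJn (n : ℕ) (hn : 5 ≤ n)
    (J : Finset ℕ) (hJ : J ⊆ Finset.Icc 3 (n - 1)) (hJc : J.card ≤ n - 4) :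
    {v : Bn n → ℚ | (∃ d : Bn n → ℕ, ∀ T, v T = (d T : ℚ)) ∧
        v - (hvec n 1 2 - svec n J) ∈ Kker n} =
      {v : Bn n → ℚ | ∃ a b, a ∈ Finset.Icc 1 (n - 1) \ J ∧
        b ∈ Finset.Icc 1 (n - 1) \ J ∧ a ≠ b ∧ v = hvec n a b - svec n J} := by
  ext v
  simp only [Set.mem_setOf_eq]
  constructor
  · rintro ⟨⟨d, hd⟩, hK⟩
    have h2 := good_hset n hn _ (pair_mem n 1 2 (by omega) (by omega) (by omega))
    have hg := good_add n _ _ _ _ (good_K n hn _ hK) h2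
    have e : v - (hvec n 1 2 - svec n J) + hset n {1, 2} = v + svec n J := by
      funext T
      simp only [Pi.add_apply, Pi.sub_apply, hvec, hset]; ring
    rw [e, zero_add] at hg
    have hev : ∀ p ∈ prs n, ∃ k : ℕ, ev n (v + svec n J) p = k := by
      intro p hp
      have hc := compl_mem n hn p hp
      refine ⟨d ⟨_, hc⟩, ?_⟩
      unfold ev
      rw [dif_pos hc, Pi.add_apply, hd]
      have : svec n J ⟨_, hc⟩ = 0 := by
        unfold svec
        apply if_neg
        rintro ⟨hsub, -⟩
        have hsub := Finset.card_le_card hsub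
        obtain ⟨q1, q2⟩ := Finset.mem_powersetCard.1 hp
        have := Finset.card_sdiff_of_subset q1
        rw [Nat.card_Icc] at this
        simp only at hsub
        omega
      rw [this, add_zero]
    choose! k hk using hev
    obtain ⟨hg1, hg2⟩ := hg
    have hs : ∑ p ∈ prs n, k p = 1 := by
      rw [Finset.sum_congr rfl hk] at hg2
      exact_mod_cast hg2
    obtain ⟨q, hq, hq1, hq0⟩ : ∃ q ∈ prs n, k q = 1 ∧ ∀ p ∈ prs n, p ≠ q → k p = 0 := by
      obtain ⟨q, hq, hqne⟩ := Finset.exists_ne_zero_of_sum_ne_zero (by omega : ∑ p ∈ prs n, k p ≠ 0)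
      have h3 := Finset.add_sum_erase (prs n) k hq
      refine ⟨q, hq, by omega, fun p hp hpq => ?_⟩
      have h4 : ∑ p ∈ (prs n).erase q, k p = 0 := by omega
      exact Finset.sum_eq_zero_iff.1 h4 p (Finset.mem_erase.2 ⟨hpq, hp⟩)
    have hv : ∀ T, (v + svec n J) T = hset n q T := by
      intro T
      rw [hg1 T, Finset.sum_eq_single_of_mem q hq]
      · rw [hk q hq, hq1]; simp
      · intro p hp hpq
        rw [hk p hp, hq0 p hp hpq]; simp
    obtain ⟨hqs, hqc⟩ := Finset.mem_powersetCard.1 hq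
    obtain ⟨a, b, hab, rfl⟩ := Finset.card_eq_two.1 hqc
    have hv' : v = hvec n a b - svec n J := by
      funext T
      have := hv T
      simp only [Pi.add_apply, Pi.sub_apply, hvec, hset] at this ⊢
      linarith
    subst hv'
    have ha : a ∈ ({a, b} : Finset ℕ) := by simp
    have hb : b ∈ ({a, b} : Finset ℕ) := by simp
    exact ⟨a, b, Finset.mem_sdiff.2 ⟨hqs ha, not_mem_J n hn J a b a (hqs ha) ha d hd⟩,
      Finset.mem_sdiff.2 ⟨hqs hb, not_mem_J n hn J a b b (hqs hb) hb d hd⟩, hab, rfl⟩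
  · rintro ⟨a, b, ha, hb, hab, rfl⟩
    rw [Finset.mem_sdiff] at ha hb
    constructor
    · refine ⟨fun T => (if (T : Finset ℕ) ∩ {a, b} = ∅ then 1 else 0) -
        (if (T : Finset ℕ) ⊆ J ∧ (T : Finset ℕ).Nonempty then 1 else 0), fun T => ?_⟩
      simp only [Pi.sub_apply, hvec, svec]
      by_cases h : (T : Finset ℕ) ⊆ J ∧ (T : Finset ℕ).Nonempty
      · have h1 : (T : Finset ℕ) ∩ {a, b} = ∅ := by
          rw [Finset.eq_empty_iff_forall_notMem]
          intro x hx
          simp only [Finset.mem_inter, Finset.mem_insert, Finset.mem_singleton] at hx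
          rcases hx with ⟨hxT, rfl | rfl⟩
          · exact ha.2 (h.1 hxT)
          · exact hb.2 (h.1 hxT)
        simp only [if_pos h, if_pos h1]; simp
      · simp only [if_neg h]; split_ifs <;> simp
    · rw [sub_sub_sub_cancel_right]
      exact diff_mem_K n a b (Finset.mem_Icc.1 ha.1) (Finset.mem_Icc.1 hb.1) hab
end
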